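/- Assume (H1)–(H4). Let y be a solution of (E) belonging to the class S₁ = {y > 0, L₁y < 0, L₂y < 0, L₃y < 0} on [t₁, ∞) for some t₁ ≥ t₀, and suppose ∫_{t₀}^∞ q(s)·π(σ(s))^γ ds = ∞. Then there exists t₂ ≥ t₁ such that the function t ↦ y(t)/π₁(t) is nondecreasing on [t₂, ∞); in particular, y(t) ≥ −(L₁y(t))^{1/α}·π₁(t) eventually. -/

import Mathlib

open Filter MeasureTheory Set

/-- Signed power: for exponents that are quotients of odd positive integers,
`x ^ p` preserves the sign of `x`. -/
noncomputable def opow (x p : ℝ) : ℝ := Real.sign x * |x| ^ p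

/-- `L₁y = r₁ · (y')^α`. -/
noncomputable def L1 (r₁ : ℝ → ℝ) (α : ℝ) (y : ℝ → ℝ) : ℝ → ℝ :=
  fun t => r₁ t * opow (deriv y t) α

/-- `L₂y = r₂ · ((L₁y)')^β`. -/
noncomputable def L2 (r₁ r₂ : ℝ → ℝ) (α β : ℝ) (y : ℝ → ℝ) : ℝ → ℝ :=
  fun t => r₂ t * opow (deriv (L1 r₁ α y) t) β

/-- `L₃y = (L₂y)'`. -/
noncomputable def L3 (r₁ r₂ : ℝ → ℝ) (α β : ℝ) (y : ℝ → ℝ) : ℝ → ℝ :=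
  deriv (L2 r₁ r₂ α β y)

/-- A real number which is a quotient of odd positive integers. -/
def OddQuotient (x : ℝ) : Prop :=
  ∃ m n : ℕ, Odd m ∧ Odd n ∧ 0 < m ∧ 0 < n ∧ x = (m : ℝ) / (n : ℝ)

/-- The standing hypotheses (H1)–(H4). -/
structure Hyp (t₀ α β γ : ℝ) (r₁ r₂ q σ : ℝ → ℝ) : Prop where
  ht₀ : 0 < t₀
  hα : OddQuotient α
  hβ : OddQuotient β
  hγ : OddQuotient γ
  hr₁c : ContinuousOn r₁ (Set.Ici t₀)
  hr₂c : ContinuousOn r₂ (Set.Ici t₀)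
  hr₁p : ∀ t, t₀ ≤ t → 0 < r₁ t
  hr₂p : ∀ t, t₀ ≤ t → 0 < r₂ t
  /-- noncanonical: `π₁(t₀) = ∫_{t₀}^∞ r₁^{-1/α} < ∞` -/
  hπ₁fin : IntegrableOn (fun s => r₁ s ^ (-(1/α))) (Set.Ici t₀)
  /-- noncanonical: `π₂(t₀) = ∫_{t₀}^∞ r₂^{-1/β} < ∞` -/
  hπ₂fin : IntegrableOn (fun s => r₂ s ^ (-(1/β))) (Set.Ici t₀)
  hqc : ContinuousOn q (Set.Ici t₀)
  hq0 : ∀ t, t₀ ≤ t → 0 ≤ q t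
  /-- `q` does not vanish eventually -/
  hqnv : ∀ T, t₀ ≤ T → ∃ t, T ≤ t ∧ q t ≠ 0
  hσd : DifferentiableOn ℝ σ (Set.Ici t₀)
  hσd' : ContinuousOn (deriv σ) (Set.Ici t₀)
  hσpos : ∀ t, t₀ ≤ t → 0 < σ t
  hσadv : ∀ t, t₀ ≤ t → t ≤ σ t
  hσmono : ∀ t, t₀ ≤ t → 0 ≤ deriv σ t

/-- `y` is a (nontrivial) solution of equation (E) on some half-line `[T,∞) ⊆ [t₀,∞)`. -/
def IsSolution (t₀ α β γ : ℝ) (r₁ r₂ q σ y : ℝ → ℝ) : Prop :=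
  ∃ T, t₀ ≤ T ∧
    ContinuousOn y (Set.Ici T) ∧
    DifferentiableOn ℝ y (Set.Ici T) ∧
    ContinuousOn (L1 r₁ α y) (Set.Ici T) ∧
    DifferentiableOn ℝ (L1 r₁ α y) (Set.Ici T) ∧
    ContinuousOn (L2 r₁ r₂ α β y) (Set.Ici T) ∧
    DifferentiableOn ℝ (L2 r₁ r₂ α β y) (Set.Ici T) ∧
    (∀ t, T ≤ t → L3 r₁ r₂ α β y t + q t * opow (y (σ t)) γ = 0) ∧
    (∀ T', T ≤ T' → ∃ t, T' ≤ t ∧ y t ≠ 0)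

/-- A function is oscillatory if it has arbitrarily large zeros. -/
def Oscillatory (y : ℝ → ℝ) : Prop := ∀ T : ℝ, ∃ t, T ≤ t ∧ y t = 0

/-- Equation (E) has property A: every solution is oscillatory or tends to `0`. -/
def PropertyA (t₀ α β γ : ℝ) (r₁ r₂ q σ : ℝ → ℝ) : Prop :=
  ∀ y : ℝ → ℝ, IsSolution t₀ α β γ r₁ r₂ q σ y →
    Oscillatory y ∨ Filter.Tendsto y Filter.atTop (nhds 0)

/-- Equation (E) is oscillatory: every solution is oscillatory. -/
def OscillatoryEq (t₀ α β γ : ℝ) (r₁ r₂ q σ : ℝ → ℝ) : Prop :=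
  ∀ y : ℝ → ℝ, IsSolution t₀ α β γ r₁ r₂ q σ y → Oscillatory y

/-- `π₁(t) = ∫_t^∞ r₁(s)^{-1/α} ds`. -/
noncomputable def pi1 (r₁ : ℝ → ℝ) (α : ℝ) (t : ℝ) : ℝ :=
  ∫ s in Set.Ioi t, r₁ s ^ (-(1/α))

/-- `π₂(t) = ∫_t^∞ r₂(s)^{-1/β} ds`. -/
noncomputable def pi2 (r₂ : ℝ → ℝ) (β : ℝ) (t : ℝ) : ℝ :=
  ∫ s in Set.Ioi t, r₂ s ^ (-(1/β))

/-- `π(t) = ∫_t^∞ r₁(s)^{-1/α} · π₂(s)^{1/α} ds`. -/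
noncomputable def piInf (r₁ r₂ : ℝ → ℝ) (α β : ℝ) (t : ℝ) : ℝ :=
  ∫ s in Set.Ioi t, r₁ s ^ (-(1/α)) * (pi2 r₂ β s) ^ (1/α)

/-- The class `S₁`: `y > 0, L₁y < 0, L₂y < 0, L₃y < 0` on `[t₁,∞)`. -/
def InS1 (r₁ r₂ : ℝ → ℝ) (α β : ℝ) (y : ℝ → ℝ) (t₁ : ℝ) : Prop :=
  ∀ t, t₁ ≤ t → 0 < y t ∧ L1 r₁ α y t < 0 ∧ L2 r₁ r₂ α β y t < 0 ∧ L3 r₁ r₂ α β y t < 0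

/-- The class `S₂`: `y > 0, L₁y < 0, L₂y > 0, L₃y < 0` on `[t₁,∞)`. -/
def InS2 (r₁ r₂ : ℝ → ℝ) (α β : ℝ) (y : ℝ → ℝ) (t₁ : ℝ) : Prop :=
  ∀ t, t₁ ≤ t → 0 < y t ∧ L1 r₁ α y t < 0 ∧ 0 < L2 r₁ r₂ α β y t ∧ L3 r₁ r₂ α β y t < 0

/-- The class `S₃`: `y > 0, L₁y > 0, L₂y > 0, L₃y < 0` on `[t₁,∞)`. -/
def InS3 (r₁ r₂ : ℝ → ℝ) (α β : ℝ) (y : ℝ → ℝ) (t₁ : ℝ) : Prop :=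
  ∀ t, t₁ ≤ t → 0 < y t ∧ 0 < L1 r₁ α y t ∧ 0 < L2 r₁ r₂ α β y t ∧ L3 r₁ r₂ α β y t < 0

/-- The class `S₄`: `y > 0, L₁y > 0, L₂y < 0, L₃y < 0` on `[t₁,∞)`. -/
def InS4 (r₁ r₂ : ℝ → ℝ) (α β : ℝ) (y : ℝ → ℝ) (t₁ : ℝ) : Prop :=
  ∀ t, t₁ ≤ t → 0 < y t ∧ 0 < L1 r₁ α y t ∧ L2 r₁ r₂ α β y t < 0 ∧ L3 r₁ r₂ α β y t < 0


theorem opow_neg_iff_aux {x p : ℝ} (hp : 0 < p) (h : opow x p < 0) : x < 0 := by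
  unfold opow at h
  by_contra hx
  push Not at hx
  have h1 : 0 ≤ Real.sign x := by
    rcases hx.eq_or_lt with h0 | h0
    · rw [← h0, Real.sign_zero]
    · rw [Real.sign_of_pos h0]; norm_num
  have h2 : 0 ≤ |x| ^ p := Real.rpow_nonneg (abs_nonneg _) _
  nlinarith [mul_nonneg h1 h2]

theorem opow_of_neg_aux {x p : ℝ} (hx : x < 0) : opow x p = -((-x) ^ p) := by
  unfold opow
  rw [Real.sign_of_neg hx, abs_of_neg hx]; ring

theorem OddQuotient.pos_aux {x : ℝ} (h : OddQuotient x) : 0 < x := by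
  obtain ⟨m, n, _, _, hm, hn, rfl⟩ := h
  have : (0:ℝ) < m := by exact_mod_cast hm
  have : (0:ℝ) < n := by exact_mod_cast hn
  positivity

theorem neg_of_mul_opow_aux {r x p : ℝ} (hr : 0 < r) (hp : 0 < p) (h : r * opow x p < 0) :
    x < 0 := by
  apply opow_neg_iff_aux hp
  by_contra h'
  push Not at h'
  nlinarith [mul_nonneg hr.le h']

theorem deriv_formula_aux {r d a : ℝ} (hr : 0 < r) (ha : 0 < a) (h : r * opow d a < 0) :
    d = r ^ (-(1/a)) * opow (r * opow d a) (1/a) := by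
  have hd := neg_of_mul_opow_aux hr ha h
  rw [opow_of_neg_aux h, opow_of_neg_aux hd]
  have e : -(r * -((-d) ^ a)) = r * (-d) ^ a := by ring
  rw [e, Real.mul_rpow hr.le (Real.rpow_nonneg (by linarith) _), ← Real.rpow_mul (by linarith),
    mul_one_div_cancel ha.ne', Real.rpow_one, Real.rpow_neg hr.le]
  have : r ^ (1/a) ≠ 0 := (Real.rpow_pos_of_pos hr _).ne'
  field_simp

theorem S1_ratio_increasing (t₀ α β γ t₁ : ℝ) (r₁ r₂ q σ y : ℝ → ℝ)
    (H : Hyp t₀ α β γ r₁ r₂ q σ)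
    (hy : IsSolution t₀ α β γ r₁ r₂ q σ y)
    (ht₁ : t₀ ≤ t₁)
    (hS1 : InS1 r₁ r₂ α β y t₁)
    (hdiv : Filter.Tendsto (fun t => ∫ s in t₀..t, q s * (piInf r₁ r₂ α β (σ s)) ^ γ)
      Filter.atTop Filter.atTop) :
    ∃ t₂, t₁ ≤ t₂ ∧ MonotoneOn (fun t => y t / pi1 r₁ α t) (Set.Ici t₂) ∧
      ∀ t, t₂ ≤ t → -(opow (L1 r₁ α y t) (1/α)) * pi1 r₁ α t ≤ y t := by
  have hα := H.hα.pos_aux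
  have hβ := H.hβ.pos_aux
  set f : ℝ → ℝ := fun s => r₁ s ^ (-(1/α)) with hf
  have hr : ∀ t, t₁ ≤ t → 0 < r₁ t := fun t ht => H.hr₁p t (ht₁.trans ht)
  have hfpos : ∀ t, t₁ ≤ t → 0 < f t := fun t ht => Real.rpow_pos_of_pos (hr t ht) _
  have hfc : ContinuousOn f (Ici t₁) := by
    apply ContinuousOn.rpow_const (H.hr₁c.mono (Ici_subset_Ici.mpr ht₁))
    intro x hx
    exact Or.inl (hr x hx).ne'
  have hfi : IntegrableOn f (Ici t₁) := H.hπ₁fin.mono_set (Ici_subset_Ici.mpr ht₁)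
  have hfio : ∀ t, t₁ ≤ t → IntegrableOn f (Ioi t) := fun t ht =>
    hfi.mono_set (fun x hx => ht.trans (le_of_lt hx))
  have hpi : ∀ t, t₁ ≤ t → pi1 r₁ α t = pi1 r₁ α t₁ - ∫ s in t₁..t, f s := by
    intro t ht
    have := intervalIntegral.integral_Ioi_sub_Ioi (hfio t₁ le_rfl) ht
    unfold pi1
    rw [← this]; ring
  have hpos : ∀ t, t₁ ≤ t → 0 < pi1 r₁ α t := by
    intro t ht
    unfold pi1
    rw [setIntegral_pos_iff_support_of_nonneg_ae]
    · have : Function.support f ∩ Ioi t = Ioi t := by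
        apply inter_eq_right.mpr
        intro x hx
        exact (hfpos x (ht.trans (le_of_lt hx))).ne'
      rw [this]; simp
    · filter_upwards [ae_restrict_mem measurableSet_Ioi] with x hx
      exact (hfpos x (ht.trans (le_of_lt hx))).le
    · exact hfio t ht
  have hder : ∀ t, t₁ < t → HasDerivAt (pi1 r₁ α) (-f t) t := by
    intro t ht
    have hca : ContinuousAt f t := hfc.continuousAt (Ici_mem_nhds ht)
    have h1 : HasDerivAt (fun u => ∫ s in t₁..u, f s) (f t) t := by
      apply intervalIntegral.integral_hasDerivAt_right
      · rw [intervalIntegrable_iff_integrableOn_Ioc_of_le ht.le]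
        exact hfi.mono_set (fun x hx => hx.1.le)
      · exact (hfc.mono Ioi_subset_Ici_self).stronglyMeasurableAtFilter isOpen_Ioi t ht
      · exact hca
    have h2 := h1.const_sub (pi1 r₁ α t₁)
    apply h2.congr_of_eventuallyEq
    filter_upwards [Ici_mem_nhds ht] with u hu
    exact hpi u hu
  have hpc : ContinuousOn (pi1 r₁ α) (Ici t₁) := by
    have h1 : ContinuousOn (fun u => pi1 r₁ α t₁ - ∫ s in t₁..u, f s) (Ici t₁) := by
      apply ContinuousOn.sub continuousOn_const
      intro x hx
      have hx' : t₁ ≤ x := hx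
      have h2 : ContinuousOn (fun u => ∫ s in t₁..u, f s) (uIcc t₁ (x+1)) := by
        apply intervalIntegral.continuousOn_primitive_interval
        rw [uIcc_of_le (by linarith)]
        exact hfi.mono_set (fun x hx => hx.1)
      rw [uIcc_of_le (by linarith)] at h2
      apply (h2 x ⟨hx', by linarith⟩).mono_of_mem_nhdsWithin
      filter_upwards [self_mem_nhdsWithin, mem_nhdsWithin_of_mem_nhds (Iic_mem_nhds (show x < x+1 by linarith))] with u h3 h4
      exact ⟨h3, h4⟩
    exact h1.congr hpi
  have hlim : Tendsto (pi1 r₁ α) atTop (nhds 0) := by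
    have h1 := intervalIntegral_tendsto_integral_Ioi t₁ (hfio t₁ le_rfl) tendsto_id
    have h2 := h1.const_sub (pi1 r₁ α t₁)
    have h3 : pi1 r₁ α t₁ - ∫ s in Ioi t₁, f s = 0 := sub_self _
    rw [h3] at h2
    apply h2.congr'
    filter_upwards [eventually_ge_atTop t₁] with u hu
    exact (hpi u hu).symm
  -- derivative facts
  have hyd : ∀ t, t₁ ≤ t → HasDerivAt y (deriv y t) t := by
    intro t ht
    have h1 := neg_of_mul_opow_aux (hr t ht) hα (hS1 t ht).2.1
    exact (differentiableAt_of_deriv_ne_zero h1.ne).hasDerivAt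
  have hyf : ∀ t, t₁ ≤ t → deriv y t = f t * opow (L1 r₁ α y t) (1/α) := fun t ht =>
    deriv_formula_aux (hr t ht) hα (hS1 t ht).2.1
  have hLneg : ∀ t, t₁ ≤ t → deriv (L1 r₁ α y) t < 0 := fun t ht =>
    neg_of_mul_opow_aux (H.hr₂p t (ht₁.trans ht)) hβ (hS1 t ht).2.2.1
  have hLd : ∀ t, t₁ ≤ t → DifferentiableAt ℝ (L1 r₁ α y) t := fun t ht =>
    differentiableAt_of_deriv_ne_zero (hLneg t ht).ne
  have hLanti : AntitoneOn (L1 r₁ α y) (Ici t₁) := by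
    apply antitoneOn_of_deriv_nonpos (convex_Ici _)
    · exact fun t ht => (hLd t ht).continuousAt.continuousWithinAt
    · rw [interior_Ici]
      exact fun t ht => (hLd t (le_of_lt ht)).differentiableWithinAt
    · rw [interior_Ici]
      exact fun t ht => (hLneg t (le_of_lt ht)).le
  have hcanti : ∀ t s, t₁ ≤ t → t ≤ s →
      opow (L1 r₁ α y s) (1/α) ≤ opow (L1 r₁ α y t) (1/α) := by
    intro t s ht hts
    have hs := ht.trans hts
    have h0 := hLanti ht hs hts
    rw [opow_of_neg_aux (hS1 t ht).2.1, opow_of_neg_aux (hS1 s hs).2.1]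
    apply neg_le_neg
    apply Real.rpow_le_rpow
    · linarith [(hS1 t ht).2.1]
    · linarith
    · positivity
  have hyc : ContinuousOn y (Ici t₁) := fun t ht => (hyd t ht).continuousAt.continuousWithinAt
  have key : ∀ t, t₁ ≤ t → -(opow (L1 r₁ α y t) (1/α)) * pi1 r₁ α t ≤ y t := by
    intro t ht
    set c := opow (L1 r₁ α y t) (1/α) with hc
    have hF : ∀ s, t < s → HasDerivAt (fun s => y s + c * pi1 r₁ α s)
        (deriv y s + c * (-f s)) s := fun s hs =>
      (hyd s (ht.trans hs.le)).add ((hder s (ht.trans_lt hs)).const_mul c)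
    have hanti : AntitoneOn (fun s => y s + c * pi1 r₁ α s) (Ici t) := by
      apply antitoneOn_of_deriv_nonpos (convex_Ici _)
      · exact (hyc.add (continuousOn_const.mul hpc)).mono (Ici_subset_Ici.mpr ht)
      · rw [interior_Ici]
        exact fun s hs => (hF s hs).differentiableAt.differentiableWithinAt
      · rw [interior_Ici]
        intro s hs
        have hs' : t₁ ≤ s := ht.trans (le_of_lt hs)
        rw [(hF s hs).deriv, hyf s hs']
        have := hcanti t s ht (le_of_lt hs)
        nlinarith [mul_nonneg (hfpos s hs').le (sub_nonneg.mpr this)]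
    have h1 : Tendsto (fun s => c * pi1 r₁ α s) atTop (nhds 0) := by
      simpa using hlim.const_mul c
    have h2 : 0 ≤ y t + c * pi1 r₁ α t := by
      apply le_of_tendsto h1
      filter_upwards [eventually_ge_atTop t] with s hs
      have h3 := hanti (mem_Ici.mpr le_rfl) (mem_Ici.mpr hs) hs
      have h4 := (hS1 s (ht.trans hs)).1
      simp only at h3
      linarith
    linarith
  refine ⟨t₁, le_rfl, ?_, key⟩
  have hG : ∀ s, t₁ < s → HasDerivAt (fun t => y t / pi1 r₁ α t)
      ((deriv y s * pi1 r₁ α s - y s * (-f s)) / (pi1 r₁ α s) ^ 2) s := fun s hs =>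
    (hyd s hs.le).div (hder s hs) (hpos s hs.le).ne'
  apply monotoneOn_of_deriv_nonneg (convex_Ici _)
  · exact hyc.div hpc (fun s hs => (hpos s hs).ne')
  · rw [interior_Ici]
    exact fun s hs => (hG s hs).differentiableAt.differentiableWithinAt
  · rw [interior_Ici]
    intro s hs
    have hs' : t₁ ≤ s := le_of_lt hs
    rw [(hG s hs).deriv, hyf s hs']
    apply div_nonneg _ (sq_nonneg _)
    have h1 := key s hs'
    have h2 := mul_nonneg (hfpos s hs').le (sub_nonneg.mpr h1)
    nlinarith [h2]
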